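/- Suppose F satisfies (G1). Then the transfer operator weakly contracts the ‖·‖_∞ norm: for every μ ∈ L^∞, ‖F^*μ‖_∞ ≤ ‖μ‖_∞. -/

import Mathlib

open MeasureTheory ENNReal Set

namespace RDS

/-- The one-sided subshift of finite type `Σ_A^+` determined by the 0-1 matrix `A`. -/
abbrev SigmaA (N : ℕ) (A : Fin N → Fin N → Bool) :=
  {x : ℕ → Fin N // ∀ i, A (x i) (x (i + 1)) = true}

variable {N : ℕ} {A : Fin N → Fin N → Bool}

/-- The shift map `σ` on `Σ_A^+`. -/
def shift (x : SigmaA N A) : SigmaA N A :=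
  ⟨fun i => x.val (i + 1), fun i => x.prop (i + 1)⟩

/-- Aperiodicity of a 0-1 matrix: some power has all entries positive. -/
def Aperiodic (A : Fin N → Fin N → Bool) : Prop :=
  ∃ k : ℕ, 0 < k ∧ ∀ i j,
    0 < ((Matrix.of fun a b => if A a b then (1 : ℕ) else 0) ^ k) i j

/-- The metric `d_θ(x,y) = Σ_i θ^i (1 - δ(x_i, y_i))` on `Σ_A^+`. -/
noncomputable def dTheta (θ : ℝ) (x y : SigmaA N A) : ℝ :=
  ∑' i : ℕ, θ ^ i * (if x.val i = y.val i then (0 : ℝ) else 1)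

/-- Cylinder sets of `Σ_A^+`. -/
def cylinder (n : ℕ) (w : Fin (n + 1) → Fin N) : Set (SigmaA N A) :=
  {x | ∀ i : Fin (n + 1), x.val i = w i}

/-- `m` is a Markov measure on `Σ_A^+` compatible with `A`: it is given on
cylinders by a stochastic matrix `P` (vanishing where `A` vanishes) and a
stationary probability vector `p`. -/
def IsMarkov (m : Measure (SigmaA N A)) : Prop :=
  ∃ (p : Fin N → ℝ≥0∞) (P : Fin N → Fin N → ℝ≥0∞),
    (∑ i, p i = 1) ∧ (∀ i, ∑ j, P i j = 1) ∧ (∀ j, ∑ i, p i * P i j = p j) ∧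
    (∀ i j, A i j = false → P i j = 0) ∧
    ∀ (n : ℕ) (w : Fin (n + 1) → Fin N),
      m (cylinder n w) = p (w 0) * ∏ i : Fin n, P (w i.castSucc) (w i.succ)

/-- `σ_i⁻¹(γ)`: the sequence `γ` with the symbol `i` prepended
(defined when `A i γ₀ = 1`), i.e. the inverse branch of the restriction `σ_i`
of `σ` to the cylinder `[i]`. -/
def prepend (i : Fin N) (x : SigmaA N A) (h : A i (x.val 0) = true) : SigmaA N A :=
  ⟨fun n => match n with
    | 0 => i
    | Nat.succ k => x.val k,
   fun j => match j with
    | 0 => h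
    | Nat.succ k => x.prop k⟩

/-- `f` is `L`-Lipschitz with respect to the distance function `d`. -/
def LipWithD {X : Type*} (d : X → X → ℝ) (L : ℝ) (f : X → ℝ) : Prop :=
  ∀ x y, |f x - f y| ≤ L * d x y

/-- `f` is Lipschitz with respect to the distance function `d`. -/
def LipD {X : Type*} (d : X → X → ℝ) (f : X → ℝ) : Prop :=
  ∃ L : ℝ, LipWithD d L f

/-- The best Lipschitz constant of `f` with respect to `d` (valued in `ℝ≥0∞`). -/
noncomputable def lipConst {X : Type*} (d : X → X → ℝ) (f : X → ℝ) : ℝ≥0∞ :=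
  ⨆ (x : X) (y : X), ENNReal.ofReal (|f x - f y| / d x y)

/-- The sup norm of `f` (valued in `ℝ≥0∞`). -/
noncomputable def supNormE {X : Type*} (f : X → ℝ) : ℝ≥0∞ :=
  ⨆ x : X, ENNReal.ofReal |f x|

/-- The norm `‖f‖_θ = ‖f‖_∞ + Lip_d(f)`. -/
noncomputable def thetaNorm {X : Type*} (d : X → X → ℝ) (f : X → ℝ) : ℝ≥0∞ :=
  supNormE f + lipConst d f

/-- The Perron-Frobenius operator duality characterizing `P_σ`:
`∫ P_σ(φ) · ψ dm = ∫ φ · (ψ ∘ σ) dm` for integrable `φ` and bounded measurable `ψ`. -/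
def IsPerronFrobenius (m : Measure (SigmaA N A))
    (Pσ : (SigmaA N A → ℝ) → SigmaA N A → ℝ) : Prop :=
  ∀ φ ψ : SigmaA N A → ℝ, Integrable φ m → Measurable ψ → (∃ C, ∀ x, |ψ x| ≤ C) →
    ∫ x, Pσ φ x * ψ x ∂m = ∫ x, φ x * ψ (shift x) ∂m

/-- Spectral gap for `P_σ` on `d_θ`-Lipschitz functions with constants `D`, `r`:
`‖P_σ^n φ‖_θ ≤ D r^n ‖φ‖_θ` for all `n` and all `d_θ`-Lipschitz `φ` with
`∫ φ dm = 0`. -/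
def HasGap (m : Measure (SigmaA N A)) (θ : ℝ)
    (Pσ : (SigmaA N A → ℝ) → SigmaA N A → ℝ) (D r : ℝ) : Prop :=
  ∀ φ : SigmaA N A → ℝ, LipD (dTheta θ) φ → (∫ x, φ x ∂m) = 0 →
    ∀ n : ℕ, thetaNorm (dTheta θ) (Pσ^[n] φ) ≤
      ENNReal.ofReal (D * r ^ n) * thetaNorm (dTheta θ) φ

/-- `Jm i` is the Jacobian `J_{m,σ_i}` of `m` with respect to the branch `σ_i`
(the restriction of `σ` to the cylinder `[i]`): `m (σ_i(E)) = ∫_E J_{m,σ_i} dm`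
for every measurable `E` (intersected with `[i]`). -/
def IsJacobian (m : Measure (SigmaA N A)) (Jm : Fin N → SigmaA N A → ℝ) : Prop :=
  ∀ (i : Fin N) (E : Set (SigmaA N A)), MeasurableSet E →
    m {γ : SigmaA N A | ∃ h : A i (γ.val 0) = true, prepend i γ h ∈ E} =
      ∫⁻ x in E ∩ {x : SigmaA N A | x.val 0 = i}, ENNReal.ofReal (Jm i x) ∂m

variable {K : Type*} [MetricSpace K] [MeasurableSpace K]

/-- The Wasserstein-Kantorovich like distance `W(ν₁,ν₂)`: the supremum of
`|∫ g dν₁ - ∫ g dν₂|` over `g : K → ℝ` with `Lip(g) ≤ 1` and `‖g‖_∞ ≤ 1`.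
Applied with `ν₂ = 0` it gives the norm `‖ν₁‖_W`; applied to the two parts of a
decomposition of a signed measure it gives its `‖·‖_W` norm. -/
noncomputable def wDist (ν₁ ν₂ : Measure K) : ℝ≥0∞ :=
  ⨆ g : {g : K → ℝ // LipschitzWith 1 g ∧ ∀ z, |g z| ≤ 1},
    ENNReal.ofReal |∫ z, g.val z ∂ν₁ - ∫ z, g.val z ∂ν₂|

/-- The skew product `F(x,z) = (σ(x), G(x,z))`. -/
def skew (G : SigmaA N A × K → K) (p : SigmaA N A × K) : SigmaA N A × K :=
  (shift p.1, G p)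

/-- The transfer operator `F^* μ (E) = μ (F⁻¹ E)` acting on signed measures. -/
noncomputable def transfer (G : SigmaA N A × K → K)
    (μ : SignedMeasure (SigmaA N A × K)) : SignedMeasure (SigmaA N A × K) :=
  μ.map (skew G)

/-- Condition (G1): uniform contraction of the vertical fibers with rate `α`. -/
def CondG1 (G : SigmaA N A × K → K) (α : ℝ) : Prop :=
  ∀ (x : SigmaA N A) (z₁ z₂ : K), dist (G (x, z₁)) (G (x, z₂)) ≤ α * dist z₁ z₂

/-- Condition (G2): `x ↦ G(x,z)` is `d_θ`-Lipschitz with constant `H`,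
uniformly in `z`. -/
def CondG2 (θ : ℝ) (G : SigmaA N A × K → K) (H : ℝ) : Prop :=
  ∀ (z : K) (x y : SigmaA N A), dist (G (x, z)) (G (y, z)) ≤ H * dTheta θ x y

/-- `T` is (the path `γ ↦ μ|_γ` of) a disintegration of `μ` along the vertical
fibers, over the reference measure `m`: `μ(E) = ∫ (μ|_γ)(E ∩ γ) dm(γ)`. -/
def IsDisint (m : Measure (SigmaA N A)) (μ : Measure (SigmaA N A × K))
    (T : SigmaA N A → Measure K) : Prop :=
  (∀ E : Set (SigmaA N A × K), MeasurableSet E →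
      μ E = ∫⁻ γ, T γ {z | (γ, z) ∈ E} ∂m) ∧
  ∀ E : Set K, MeasurableSet E → Measurable fun γ => T γ E

/-- The (essential) `‖·‖_W`-Lipschitz constant of a path of measures,
`|Γ|_θ^ω = ess sup_{γ₁ ≠ γ₂} ‖Γ(γ₁) - Γ(γ₂)‖_W / d_θ(γ₁,γ₂)`. -/
noncomputable def pathLip (m : Measure (SigmaA N A)) (θ : ℝ)
    (T : SigmaA N A → Measure K) : ℝ≥0∞ :=
  essSup (fun p : SigmaA N A × SigmaA N A =>
    wDist (T p.1) (T p.2) / ENNReal.ofReal (dTheta θ p.1 p.2)) (m.prod m)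

/-- The Lipschitz constant `|μ|_θ` of a positive measure: the infimum over
disintegrations `ω` of `μ` of `|μ|_θ^ω`. -/
noncomputable def lipDisint (m : Measure (SigmaA N A)) (θ : ℝ)
    (μ : Measure (SigmaA N A × K)) : ℝ≥0∞ :=
  ⨅ T : {T : SigmaA N A → Measure K // IsDisint m μ T}, pathLip m θ T.val

/-- The fiberwise transfer formula: the path representing `F^*μ` induced by the
path `T` representing `μ`, i.e.
`γ ↦ Σ_i 1_{σ([i])}(γ) (F_{iγ})_*(T(iγ)) / J_{m,σ_i}(iγ)`. -/
noncomputable def transferPath (G : SigmaA N A × K → K) (Jm : Fin N → SigmaA N A → ℝ)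
    (T : SigmaA N A → Measure K) : SigmaA N A → Measure K :=
  fun γ => ∑ i : Fin N, if h : A i (γ.val 0) = true then
      ENNReal.ofReal ((Jm i (prepend i γ h))⁻¹) •
        ((T (prepend i γ h)).map fun z => G (prepend i γ h, z))
    else 0

variable [BorelSpace K] [CompactSpace K] [Nonempty K]

/-- The fiberwise restriction `μ|_γ = π₂_* (φ₁(γ) μ_γ)` of a finite positive
measure `μ` on `Σ_A^+ × K`, where `({μ_γ}_γ, φ₁ m)` is the Rokhlin
disintegration of `μ` along the vertical fibers and `φ₁ = d(π₁_*μ)/dm`. -/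
noncomputable def fiberR (m : Measure (SigmaA N A))
    (μ : Measure (SigmaA N A × K)) (γ : SigmaA N A) : Measure K := by
  by_cases h : IsFiniteMeasure μ
  · haveI := h
    exact (μ.fst.rnDeriv m γ) • μ.condKernel γ
  · exact 0

/-- The norm `‖μ‖_∞ = ess sup_γ ‖μ|_γ‖_W` of a signed measure written as a
difference `μ = μ₁ - μ₂` of positive measures. -/
noncomputable def infNormPair (m : Measure (SigmaA N A))
    (μ₁ μ₂ : Measure (SigmaA N A × K)) : ℝ≥0∞ :=
  essSup (fun γ => wDist (fiberR m μ₁ γ) (fiberR m μ₂ γ)) m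

/-- The marginal density `φ₁ = d(π₁_*μ)/dm` of the signed measure `μ = μ₁ - μ₂`. -/
noncomputable def phiPair (m : Measure (SigmaA N A))
    (μ₁ μ₂ : Measure (SigmaA N A × K)) (γ : SigmaA N A) : ℝ :=
  (μ₁.fst.rnDeriv m γ).toReal - (μ₂.fst.rnDeriv m γ).toReal

/-- Membership in `AB`: both parts are finite with first marginal absolutely
continuous with respect to `m`. -/
def MemABPair (m : Measure (SigmaA N A)) (μ₁ μ₂ : Measure (SigmaA N A × K)) : Prop :=
  μ₁.fst ≪ m ∧ μ₂.fst ≪ m ∧ IsFiniteMeasure μ₁ ∧ IsFiniteMeasure μ₂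

/-- Membership in `S^∞`: `μ ∈ AB`, `‖μ‖_∞ < ∞` and the marginal density `φ₁`
has a `d_θ`-Lipschitz version. -/
def MemSPair (m : Measure (SigmaA N A)) (θ : ℝ)
    (μ₁ μ₂ : Measure (SigmaA N A × K)) : Prop :=
  MemABPair m μ₁ μ₂ ∧ infNormPair m μ₁ μ₂ < ⊤ ∧
    ∃ ψ : SigmaA N A → ℝ, ψ =ᵐ[m] phiPair m μ₁ μ₂ ∧ LipD (dTheta θ) ψ

/-- `‖φ₁‖_θ`, computed on the best version of the marginal density. -/
noncomputable def thetaNormMu (m : Measure (SigmaA N A)) (θ : ℝ)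
    (μ₁ μ₂ : Measure (SigmaA N A × K)) : ℝ≥0∞ :=
  ⨅ ψ : {ψ : SigmaA N A → ℝ // ψ =ᵐ[m] phiPair m μ₁ μ₂}, thetaNorm (dTheta θ) ψ.val

/-- The norm `‖μ‖_{S^∞} = ‖φ₁‖_θ + ‖μ‖_∞`. -/
noncomputable def sNormPair (m : Measure (SigmaA N A)) (θ : ℝ)
    (μ₁ μ₂ : Measure (SigmaA N A × K)) : ℝ≥0∞ :=
  thetaNormMu m θ μ₁ μ₂ + infNormPair m μ₁ μ₂

/-- Positive part of a signed measure. -/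
noncomputable def jPos {X : Type*} [MeasurableSpace X] (μ : SignedMeasure X) : Measure X :=
  μ.toJordanDecomposition.posPart

/-- Negative part of a signed measure. -/
noncomputable def jNeg {X : Type*} [MeasurableSpace X] (μ : SignedMeasure X) : Measure X :=
  μ.toJordanDecomposition.negPart

/-- Membership in `AB` for signed measures. -/
def MemAB (m : Measure (SigmaA N A)) (μ : SignedMeasure (SigmaA N A × K)) : Prop :=
  MemABPair m (jPos μ) (jNeg μ)

/-- Membership in `S^∞` for signed measures. -/
def MemS (m : Measure (SigmaA N A)) (θ : ℝ) (μ : SignedMeasure (SigmaA N A × K)) : Prop :=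
  MemSPair m θ (jPos μ) (jNeg μ)

/-- `‖μ‖_∞` for signed measures. -/
noncomputable def infNorm (m : Measure (SigmaA N A))
    (μ : SignedMeasure (SigmaA N A × K)) : ℝ≥0∞ :=
  infNormPair m (jPos μ) (jNeg μ)

/-- `‖μ‖_{S^∞}` for signed measures. -/
noncomputable def sNorm (m : Measure (SigmaA N A)) (θ : ℝ)
    (μ : SignedMeasure (SigmaA N A × K)) : ℝ≥0∞ :=
  sNormPair m θ (jPos μ) (jNeg μ)

/-- `‖φ₁‖_∞` of the marginal density of a signed measure. -/
noncomputable def phiSup (m : Measure (SigmaA N A))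
    (μ : SignedMeasure (SigmaA N A × K)) : ℝ≥0∞ :=
  essSup (fun γ => ENNReal.ofReal |phiPair m (jPos μ) (jNeg μ) γ|) m

/-!
For a test function `g` and a measurable set `s` in the base, integrating `γ ↦ ∫ g d(F^*μ)|_γ` over
`s` gives the `μ`-integral of `g ∘ G` over `σ⁻¹(s) × K`, hence the integral over `σ⁻¹(s)` of the
fiber integrals of `g ∘ G` against `μ|_γ`. As `G` is `1`-Lipschitz on fibers, `g ∘ G(γ, ·)` is again
a test function, so by invariance of `m` the result is at most `‖μ‖_∞ m(s)` in absolute value. Since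
`s` is arbitrary, `|∫ g d(F^*μ)|_γ| ≤ ‖μ‖_∞` for almost every `γ`; separability of `C(K, ℝ)` makes
the exceptional null set independent of `g`.
-/

section SignedMeasure

variable {X : Type*} [MeasurableSpace X]

instance (μ : SignedMeasure X) : IsFiniteMeasure (jPos μ) :=
  μ.toJordanDecomposition.posPart_finite

instance (μ : SignedMeasure X) : IsFiniteMeasure (jNeg μ) :=
  μ.toJordanDecomposition.negPart_finite

theorem variation_eq_jPos_add_jNeg (μ : SignedMeasure X) : μ.variation = jPos μ + jNeg μ :=
  μ.totalVariation_eq_variation.symm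

instance (μ : SignedMeasure X) : IsFiniteMeasure μ.variation := by
  rw [variation_eq_jPos_add_jNeg]
  infer_instance

theorem integrable_iff_jPos_jNeg {E : Type*} [NormedAddCommGroup E] {μ : SignedMeasure X}
    {f : X → E} : μ.Integrable f ↔ Integrable f (jPos μ) ∧ Integrable f (jNeg μ) := by
  rw [VectorMeasure.Integrable, variation_eq_jPos_add_jNeg, integrable_add_measure]

theorem setIntegral_eq_jPos_sub_jNeg {E : Type*} [NormedAddCommGroup E] [NormedSpace ℝ E]
    {μ : SignedMeasure X} {f : X → E} (hf : μ.Integrable f) {s : Set X} (hs : MeasurableSet s) :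
    ∫ᵛ x in s, f x ∂<•μ = ∫ x in s, f x ∂jPos μ - ∫ x in s, f x ∂jNeg μ := by
  have hμ : (jPos μ).toSignedMeasure - (jNeg μ).toSignedMeasure = μ :=
    μ.toSignedMeasure_toJordanDecomposition
  have hpos : (jPos μ).toSignedMeasure.Integrable f := by
    simpa [VectorMeasure.Integrable] using (integrable_iff_jPos_jNeg.1 hf).1
  have hneg : (jNeg μ).toSignedMeasure.Integrable f := by
    simpa [VectorMeasure.Integrable] using (integrable_iff_jPos_jNeg.1 hf).2
  conv_lhs => rw [← hμ]
  rw [VectorMeasure.restrict_sub, VectorMeasure.integral_sub_vectorMeasure hpos.restrict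
    hneg.restrict, VectorMeasure.setIntegral_toSignedMeasure hs,
    VectorMeasure.setIntegral_toSignedMeasure hs]

end SignedMeasure

section SetIntegral

variable {X : Type*} [MeasurableSpace X] {m : Measure X} [SigmaFinite m] {f : X → ℝ} {c : ℝ}

theorem ae_le_const_of_forall_setIntegral_le (hf : Integrable f m)
    (hc : ∀ s, MeasurableSet s → m s < ∞ → ∫ x in s, f x ∂m ≤ c * m.real s) :
    ∀ᵐ x ∂m, f x ≤ c := by
  have hconst (s : Set X) (hs : m s < ∞) : IntegrableOn (fun _ ↦ c) s m :=
    integrableOn_const hs.ne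
  have hnonneg : 0 ≤ᵐ[m] fun x ↦ c - f x := by
    refine ae_nonneg_of_forall_setIntegral_nonneg_of_sigmaFinite
      (fun s _ hs ↦ (hconst s hs).sub hf.integrableOn) fun s hsm hs ↦ ?_
    rw [integral_sub (hconst s hs) hf.integrableOn, setIntegral_const, smul_eq_mul, mul_comm]
    exact sub_nonneg.2 (hc s hsm hs)
  exact hnonneg.mono fun x ↦ sub_nonneg.1

theorem ae_abs_le_of_forall_abs_setIntegral_le (hf : Integrable f m)
    (hc : ∀ s, MeasurableSet s → m s < ∞ → |∫ x in s, f x ∂m| ≤ c * m.real s) :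
    ∀ᵐ x ∂m, |f x| ≤ c := by
  have hupper : ∀ᵐ x ∂m, f x ≤ c :=
    ae_le_const_of_forall_setIntegral_le hf fun s hsm hs ↦ (abs_le'.1 (hc s hsm hs)).1
  have hlower : ∀ᵐ x ∂m, -f x ≤ c :=
    ae_le_const_of_forall_setIntegral_le hf.neg fun s hsm hs ↦ by
      simpa only [Pi.neg_apply, integral_neg] using (abs_le'.1 (hc s hsm hs)).2
  filter_upwards [hupper, hlower] with x hx hx' using abs_le'.2 ⟨hx, hx'⟩

end SetIntegral

section AbsolutelyContinuous

variable {Y : Type*} [MeasurableSpace Y]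

theorem memAB_iff_fst_variation_absolutelyContinuous {m : Measure (SigmaA N A)}
    {μ : SignedMeasure (SigmaA N A × Y)} : MemAB m μ ↔ μ.variation.fst ≪ m := by
  rw [variation_eq_jPos_add_jNeg, Measure.fst_add, Measure.AbsolutelyContinuous.add_left_iff]
  exact ⟨fun h ↦ ⟨h.1, h.2.1⟩, fun h ↦ ⟨h.1, h.2, inferInstance, inferInstance⟩⟩

theorem measurable_shift : Measurable (shift : SigmaA N A → SigmaA N A) :=
  have hcoord (i : ℕ) : Measurable fun x : SigmaA N A ↦ x.1 (i + 1) :=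
    (measurable_pi_apply (i + 1)).comp measurable_subtype_coe
  (measurable_pi_lambda _ hcoord).subtype_mk

theorem memAB_transfer {m : Measure (SigmaA N A)} (hm : Measure.QuasiMeasurePreserving shift m m)
    {G : SigmaA N A × Y → Y} (hG : Measurable (skew G)) {μ : SignedMeasure (SigmaA N A × Y)}
    (hμ : MemAB m μ) : MemAB m (transfer G μ) := by
  rw [memAB_iff_fst_variation_absolutelyContinuous] at hμ ⊢
  have hle : (transfer G μ).variation.fst ≤ (μ.variation.map (skew G)).fst :=
    Measure.map_mono VectorMeasure.variation_map_le measurable_fst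
  have hfst : (μ.variation.map (skew G)).fst = μ.variation.fst.map shift := by
    rw [Measure.fst, Measure.fst, Measure.map_map measurable_fst hG,
      Measure.map_map hm.measurable measurable_fst]
    rfl
  exact (hle.trans_eq hfst).absolutelyContinuous.trans <|
    (hμ.map hm.measurable).trans hm.absolutelyContinuous

end AbsolutelyContinuous

section TestFunction

variable {X Y : Type*} [PseudoEMetricSpace X] [PseudoEMetricSpace Y] {g : Y → ℝ}

/-- The test functions of the norm `‖·‖_W`: bounded by `1` and `1`-Lipschitz. -/
def IsTestFunction (g : Y → ℝ) : Prop :=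
  LipschitzWith 1 g ∧ ∀ z, |g z| ≤ 1

theorem IsTestFunction.comp_lipschitzWith (hg : IsTestFunction g) {φ : X → Y}
    (hφ : LipschitzWith 1 φ) : IsTestFunction (g ∘ φ) :=
  ⟨by simpa using hg.1.comp hφ, fun x ↦ hg.2 (φ x)⟩

theorem IsTestFunction.measurable [MeasurableSpace Y] [OpensMeasurableSpace Y]
    (hg : IsTestFunction g) : Measurable g :=
  hg.1.continuous.measurable

end TestFunction

section Wasserstein

variable {Y : Type*} [MetricSpace Y] [MeasurableSpace Y]

theorem ofReal_abs_integral_sub_le_wDist {g : Y → ℝ} (hg : IsTestFunction g) (ν₁ ν₂ : Measure Y) :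
    ENNReal.ofReal |∫ z, g z ∂ν₁ - ∫ z, g z ∂ν₂| ≤ wDist ν₁ ν₂ :=
  le_iSup (fun g : {g : Y → ℝ // LipschitzWith 1 g ∧ ∀ z, |g z| ≤ 1} ↦
    ENNReal.ofReal |∫ z, g.val z ∂ν₁ - ∫ z, g.val z ∂ν₂|) ⟨g, hg⟩

theorem exists_seq_isTestFunction_wDist_eq_iSup [OpensMeasurableSpace Y] [CompactSpace Y] :
    ∃ g : ℕ → Y → ℝ, (∀ n, IsTestFunction (g n)) ∧
      ∀ (ν₁ ν₂ : Measure Y) [IsFiniteMeasure ν₁] [IsFiniteMeasure ν₂],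
        wDist ν₁ ν₂ = ⨆ n, ENNReal.ofReal |∫ z, g n z ∂ν₁ - ∫ z, g n z ∂ν₂| := by
  let T := {g : C(Y, ℝ) // IsTestFunction g}
  have : Nonempty T := ⟨0, LipschitzWith.const' 0, by simp⟩
  -- `T` is separable as a subspace of `C(Y, ℝ)`, which is separable since `Y` is compact metric.
  let d : ℕ → T := TopologicalSpace.denseSeq T
  refine ⟨fun n ↦ (d n).1, fun n ↦ (d n).2, fun ν₁ ν₂ _ _ ↦ ?_⟩
  have hcont (ν : Measure Y) [IsFiniteMeasure ν] : Continuous fun g : T ↦ ∫ z, g.1 z ∂ν :=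
    continuous_of_dominated (fun g ↦ g.1.continuous.aestronglyMeasurable)
      (fun g ↦ .of_forall g.2.2) (integrable_const 1)
      (.of_forall fun z ↦ (continuous_eval_const z).comp continuous_subtype_val)
  let Φ (g : T) : ℝ≥0∞ := ENNReal.ofReal |∫ z, g.1 z ∂ν₁ - ∫ z, g.1 z ∂ν₂|
  have hΦ : Continuous Φ := ENNReal.continuous_ofReal.comp ((hcont ν₁).sub (hcont ν₂)).abs
  calc wDist ν₁ ν₂
    _ = ⨆ g : T, Φ g := le_antisymm
      (iSup_le fun g ↦ le_iSup Φ ⟨⟨g.1, g.2.1.continuous⟩, g.2⟩)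
      (iSup_le fun g ↦ ofReal_abs_integral_sub_le_wDist g.2 ν₁ ν₂)
    _ = ⨆ g : range d, Φ g := ((TopologicalSpace.denseRange_denseSeq T).ciSup' hΦ).symm
    _ = ⨆ n, Φ (d n) := iSup_range' Φ d

end Wasserstein

section Fiber

variable {m : Measure (SigmaA N A)}

theorem fiberR_eq_smul_condKernel (m : Measure (SigmaA N A)) (ρ : Measure (SigmaA N A × K))
    [hρ : IsFiniteMeasure ρ] (γ : SigmaA N A) :
    fiberR m ρ γ = ρ.fst.rnDeriv m γ • ρ.condKernel γ :=
  dif_pos hρ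

theorem ae_isFiniteMeasure_fiberR (m : Measure (SigmaA N A)) (ρ : Measure (SigmaA N A × K))
    [IsFiniteMeasure ρ] : ∀ᵐ γ ∂m, IsFiniteMeasure (fiberR m ρ γ) := by
  filter_upwards [Measure.rnDeriv_lt_top ρ.fst m] with γ hγ
  rw [fiberR_eq_smul_condKernel]
  exact Measure.smul_finite _ hγ.ne

section Integral

variable [SigmaFinite m] {E : Type*} [NormedAddCommGroup E] [NormedSpace ℝ E]
  {ρ : Measure (SigmaA N A × K)} [IsFiniteMeasure ρ] {f : SigmaA N A × K → E}

theorem integrable_integral_fiberR (hρ : ρ.fst ≪ m) (hf : Integrable f ρ) :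
    Integrable (fun γ ↦ ∫ z, f (γ, z) ∂fiberR m ρ γ) m := by
  simp only [fiberR_eq_smul_condKernel, integral_smul_measure]
  exact (integrable_rnDeriv_smul_iff hρ).2 hf.integral_condKernel

theorem setIntegral_integral_fiberR (hρ : ρ.fst ≪ m) (hf : Integrable f ρ) {s : Set (SigmaA N A)}
    (hs : MeasurableSet s) :
    ∫ γ in s, ∫ z, f (γ, z) ∂fiberR m ρ γ ∂m = ∫ p in s ×ˢ univ, f p ∂ρ := by
  simp only [fiberR_eq_smul_condKernel, integral_smul_measure]
  rw [setIntegral_rnDeriv_smul hρ hs,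
    Measure.setIntegral_condKernel_univ_right hs hf.integrableOn]

end Integral

/-- The integral of `f` along the fiber over `γ` against `μ|_γ`, where `μ|_γ` is the difference of
the restrictions of the Jordan parts of `μ`. -/
noncomputable def fiberIntegral (m : Measure (SigmaA N A)) (μ : SignedMeasure (SigmaA N A × K))
    (f : SigmaA N A × K → ℝ) (γ : SigmaA N A) : ℝ :=
  ∫ z, f (γ, z) ∂fiberR m (jPos μ) γ - ∫ z, f (γ, z) ∂fiberR m (jNeg μ) γ

theorem ae_ofReal_abs_fiberIntegral_le_infNorm (m : Measure (SigmaA N A))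
    (μ : SignedMeasure (SigmaA N A × K)) {f : SigmaA N A × K → ℝ}
    (hf : ∀ γ, IsTestFunction fun z ↦ f (γ, z)) :
    ∀ᵐ γ ∂m, ENNReal.ofReal |fiberIntegral m μ f γ| ≤ infNorm m μ := by
  filter_upwards [ENNReal.ae_le_essSup fun γ ↦
    wDist (fiberR m (jPos μ) γ) (fiberR m (jNeg μ) γ)] with γ hγ
  exact (ofReal_abs_integral_sub_le_wDist (hf γ) _ _).trans hγ

theorem infNorm_le_of_forall_isTestFunction {μ : SignedMeasure (SigmaA N A × K)} {C : ℝ≥0∞}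
    (hC : ∀ g : K → ℝ, IsTestFunction g →
      ∀ᵐ γ ∂m, ENNReal.ofReal |fiberIntegral m μ (fun p ↦ g p.2) γ| ≤ C) :
    infNorm m μ ≤ C := by
  obtain ⟨g, hg, hgW⟩ := exists_seq_isTestFunction_wDist_eq_iSup (Y := K)
  refine essSup_le_of_ae_le C ?_
  filter_upwards [ae_all_iff.2 fun n ↦ hC (g n) (hg n), ae_isFiniteMeasure_fiberR m (jPos μ),
    ae_isFiniteMeasure_fiberR m (jNeg μ)] with γ hγ _ _
  rw [hgW]
  exact iSup_le hγ

variable [SigmaFinite m] {μ : SignedMeasure (SigmaA N A × K)} {f : SigmaA N A × K → ℝ}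

theorem integrable_fiberIntegral (hμ : MemAB m μ) (hf : μ.Integrable f) :
    Integrable (fiberIntegral m μ f) m :=
  have ⟨hpos, hneg⟩ := integrable_iff_jPos_jNeg.1 hf
  (integrable_integral_fiberR hμ.1 hpos).sub (integrable_integral_fiberR hμ.2.1 hneg)

theorem setIntegral_fiberIntegral (hμ : MemAB m μ) (hf : μ.Integrable f) {s : Set (SigmaA N A)}
    (hs : MeasurableSet s) :
    ∫ γ in s, fiberIntegral m μ f γ ∂m = ∫ᵛ p in s ×ˢ univ, f p ∂<•μ := by
  obtain ⟨hpos, hneg⟩ := integrable_iff_jPos_jNeg.1 hf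
  unfold fiberIntegral
  rw [integral_sub (integrable_integral_fiberR hμ.1 hpos).integrableOn
      (integrable_integral_fiberR hμ.2.1 hneg).integrableOn,
    setIntegral_integral_fiberR hμ.1 hpos hs, setIntegral_integral_fiberR hμ.2.1 hneg hs,
    setIntegral_eq_jPos_sub_jNeg hf (hs.prod .univ)]

end Fiber

section Transfer

variable {m : Measure (SigmaA N A)} [SigmaFinite m] {G : SigmaA N A × K → K}
  {μ : SignedMeasure (SigmaA N A × K)} {f : SigmaA N A × K → ℝ}

theorem setIntegral_fiberIntegral_transfer (hm : Measure.QuasiMeasurePreserving shift m m)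
    (hG : Measurable (skew G)) (hμ : MemAB m μ) (hf : StronglyMeasurable f)
    (hfG : μ.Integrable (f ∘ skew G)) {s : Set (SigmaA N A)} (hs : MeasurableSet s) :
    ∫ γ in s, fiberIntegral m (transfer G μ) f γ ∂m =
      ∫ γ in shift ⁻¹' s, fiberIntegral m μ (f ∘ skew G) γ ∂m := by
  have hf' : (transfer G μ).Integrable f :=
    VectorMeasure.Integrable.map hf.aestronglyMeasurable hfG
  rw [setIntegral_fiberIntegral (memAB_transfer hm hG hμ) hf' hs,
    setIntegral_fiberIntegral hμ hfG (hm.measurable hs)]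
  exact VectorMeasure.setIntegral_map hG (hs.prod .univ) hf.aestronglyMeasurable hfG

theorem ae_abs_fiberIntegral_transfer_le (hm : MeasurePreserving shift m m)
    (hG : Measurable (skew G)) (hμ : MemAB m μ) (hf : StronglyMeasurable f)
    (hfG : μ.Integrable (f ∘ skew G)) {c : ℝ}
    (hc : ∀ᵐ γ ∂m, |fiberIntegral m μ (f ∘ skew G) γ| ≤ c) :
    ∀ᵐ γ ∂m, |fiberIntegral m (transfer G μ) f γ| ≤ c := by
  have hf' : (transfer G μ).Integrable f :=
    VectorMeasure.Integrable.map hf.aestronglyMeasurable hfG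
  have hμ' : MemAB m (transfer G μ) := memAB_transfer hm.quasiMeasurePreserving hG hμ
  refine ae_abs_le_of_forall_abs_setIntegral_le (integrable_fiberIntegral hμ' hf')
    fun s hs hs' ↦ ?_
  have hpre : m (shift ⁻¹' s) = m s := hm.measure_preimage hs.nullMeasurableSet
  calc |∫ γ in s, fiberIntegral m (transfer G μ) f γ ∂m|
    _ = |∫ γ in shift ⁻¹' s, fiberIntegral m μ (f ∘ skew G) γ ∂m| := by
      rw [setIntegral_fiberIntegral_transfer hm.quasiMeasurePreserving hG hμ hf hfG hs]
    _ ≤ c * m.real (shift ⁻¹' s) :=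
      norm_setIntegral_le_of_norm_le_const_ae (f := fiberIntegral m μ (f ∘ skew G))
        (hpre.trans_lt hs') (ae_restrict_of_ae hc)
    _ = c * m.real s := by rw [measureReal_def, hpre, measureReal_def]

theorem transfer_weak_contraction_general (hm : MeasurePreserving shift m m)
    (hGm : Measurable (skew G)) (hG : ∀ γ, LipschitzWith 1 fun z ↦ G (γ, z)) (hμ : MemAB m μ) :
    infNorm m (transfer G μ) ≤ infNorm m μ := by
  obtain hμ_top | hμ_fin := eq_or_ne (infNorm m μ) ∞
  · exact hμ_top ▸ le_top
  refine infNorm_le_of_forall_isTestFunction fun g hg ↦ ?_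
  have hgG : μ.Integrable ((fun p ↦ g p.2) ∘ skew G) :=
    .of_bound (hg.measurable.comp hGm.snd).aestronglyMeasurable 1 (.of_forall fun p ↦ hg.2 (G p))
  have htest (γ : SigmaA N A) : IsTestFunction fun z ↦ ((fun p ↦ g p.2) ∘ skew G) (γ, z) :=
    hg.comp_lipschitzWith (hG γ)
  have hbound := ae_ofReal_abs_fiberIntegral_le_infNorm m μ htest
  simp only [ENNReal.ofReal_le_iff_le_toReal hμ_fin] at hbound ⊢
  exact ae_abs_fiberIntegral_transfer_le hm hGm hμ
    (hg.measurable.comp measurable_snd).stronglyMeasurable hgG hbound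

end Transfer

/-- **The weak norm is weakly contracted by `F^*`.**
If `F` satisfies (G1), then `‖F^* μ‖_∞ ≤ ‖μ‖_∞` for every `μ ∈ L^∞`. -/
theorem transfer_weak_contraction
    (N : ℕ) (A : Fin N → Fin N → Bool) (hA : Aperiodic A)
    (θ : ℝ) (hθ0 : 0 < θ) (hθ1 : θ < 1)
    (m : Measure (SigmaA N A)) [IsProbabilityMeasure m]
    (hmM : IsMarkov m) (hminv : m.map shift = m)
    {K : Type*} [MetricSpace K] [CompactSpace K] [Nonempty K]
    [MeasurableSpace K] [BorelSpace K]
    (hdiam : Metric.diam (Set.univ : Set K) = 1)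
    (G : SigmaA N A × K → K) (hGm : Measurable (skew G))
    (α : ℝ) (hα0 : 0 < α) (hα1 : α < 1) (hG1 : CondG1 G α)
    (μ : SignedMeasure (SigmaA N A × K))
    (hAB : MemAB m μ) (hfin : infNorm m μ < ⊤) :
    infNorm m (transfer G μ) ≤ infNorm m μ :=
  transfer_weak_contraction_general ⟨measurable_shift, hminv⟩ hGm
    (fun x ↦ .of_dist_le_mul fun z₁ z₂ ↦ (hG1 x z₁ z₂).trans <|
      mul_le_mul_of_nonneg_right (by simpa using hα1.le) dist_nonneg) hAB

end RDS
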